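/- (Key inequality in the proof of Theorem 5) For any policy π and any reference policy μ with μ(a|s) > 0 for all s, a, the fixed point of the regularized evaluation operator is dominated by the fixed point of the unregularized pessimistic Bellman operator: Q̄^π_{N,k;μ}(s,a) ≤ Q^π_{N,k}(s,a) for all (s,a). -/

import Mathlib

/-- `kmin x k` is the entry in position `k` (0-indexed) of a monotone nondecreasing
sorted arrangement of the tuple `x`, i.e. the `(k+1)`-th smallest entry counted with
multiplicity. -/
noncomputable def kmin {N : ℕ} (x : Fin N → ℝ) (k : Fin N) : ℝ := x (Tuple.sort x k)

/-- A probability mass function on a finite type: nonnegative and summing to one. -/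
def IsPMF {α : Type*} [Fintype α] (p : α → ℝ) : Prop :=
  (∀ a, 0 ≤ p a) ∧ ∑ a, p a = 1

/-- Sup norm `‖Q‖_∞ = max_{(s,a)} |Q(s,a)|` on `S × A → ℝ` (curried). -/
noncomputable def supNorm {S A : Type*} [Fintype S] [Fintype A] [Nonempty S] [Nonempty A]
    (Q : S → A → ℝ) : ℝ :=
  Finset.univ.sup' Finset.univ_nonempty (fun p : S × A => |Q p.1 p.2|)

/-- The `(N,k)`-pessimistic Bellman operator (with `k` given 0-indexed as `k : Fin N`):
`(B^π_{N,k} Q)(s,a) = r(s,a) + γ · Σ_{v : Fin N → ι} (Π_j P(v_j)) ·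
  kmin_k( j ↦ Σ_{s'} M(v_j)(s,a)(s') · Σ_{a'} π(a'|s') · Q(s',a') )`. -/
noncomputable def pessBellman {S A ι : Type*} [Fintype S] [Fintype A] [Fintype ι]
    (r : S → A → ℝ) (γ : ℝ) (P : ι → ℝ) (M : ι → S → A → S → ℝ)
    (π : S → A → ℝ) (N : ℕ) (k : Fin N) (Q : S → A → ℝ) : S → A → ℝ :=
  fun s a => r s a + γ * ∑ v : Fin N → ι, (∏ j, P (v j)) *
    kmin (fun j => ∑ s', M (v j) s a s' * ∑ a', π s' a' * Q s' a') k

/-- Kullback–Leibler divergence `KL(p‖q) = Σ_a p(a)·log(p(a)/q(a))` on a finite type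
(with the convention `0·log 0 = 0`, automatic here). -/
noncomputable def KLdiv {α : Type*} [Fintype α] (p q : α → ℝ) : ℝ :=
  ∑ a, p a * Real.log (p a / q a)

/-- The soft `(N,k)`-pessimistic Bellman operator with reference policy `μ` and
coefficient `α` (with `k` given 0-indexed as `k : Fin N`):
`(B̄*_{N,k;μ} Q)(s,a) = r(s,a) + γ · Σ_{v} (Π_j P(v_j)) ·
  kmin_k( j ↦ Σ_{s'} M(v_j)(s,a)(s') · α·log Σ_{a'} μ(a'|s')·exp(Q(s',a')/α) )`. -/
noncomputable def softBellman {S A ι : Type*} [Fintype S] [Fintype A] [Fintype ι]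
    (r : S → A → ℝ) (γ : ℝ) (P : ι → ℝ) (M : ι → S → A → S → ℝ)
    (μ : S → A → ℝ) (α : ℝ) (N : ℕ) (k : Fin N) (Q : S → A → ℝ) : S → A → ℝ :=
  fun s a => r s a + γ * ∑ v : Fin N → ι, (∏ j, P (v j)) *
    kmin (fun j => ∑ s', M (v j) s a s' *
      (α * Real.log (∑ a', μ s' a' * Real.exp (Q s' a' / α)))) k

/-- The regularized `(N,k)`-pessimistic evaluation operator for policy `π`, reference
policy `μ` and coefficient `α` (with `k` given 0-indexed as `k : Fin N`):
`(B̄^π_{N,k;μ} Q)(s,a) = r(s,a) + γ · Σ_{v} (Π_j P(v_j)) ·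
  kmin_k( j ↦ Σ_{s'} M(v_j)(s,a)(s') · (Σ_{a'} π(a'|s')·Q(s',a') − α·KL(π(·|s')‖μ(·|s'))) )`. -/
noncomputable def regBellman {S A ι : Type*} [Fintype S] [Fintype A] [Fintype ι]
    (r : S → A → ℝ) (γ : ℝ) (P : ι → ℝ) (M : ι → S → A → S → ℝ)
    (π μ : S → A → ℝ) (α : ℝ) (N : ℕ) (k : Fin N) (Q : S → A → ℝ) : S → A → ℝ :=
  fun s a => r s a + γ * ∑ v : Fin N → ι, (∏ j, P (v j)) *
    kmin (fun j => ∑ s', M (v j) s a s' *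
      ((∑ a', π s' a' * Q s' a') - α * KLdiv (π s') (μ s'))) k

/-!
Both operators back up a state-value function through the same map `pessBackup`, which is monotone
and shrinks constant shifts by the factor `γ`. Since the KL penalty is nonnegative, the
regularized operator lies below the unregularized one, so its fixed point `Q̄` satisfies
`Q̄ ≤ B Q̄`. If `c` is the maximum of `Q̄ - Q`, then `Q̄ ≤ B Q̄ ≤ B Q + γ c = Q + γ c`; hence
`c ≤ γ c`, that is, `c ≤ 0`.
-/

theorem kmin_le_iff {N : ℕ} {x : Fin N → ℝ} {k : Fin N} {a : ℝ} :
    kmin x k ≤ a ↔ (k : ℕ) < Finset.card {j | x j ≤ a} := by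
  rw [← Finset.card_equiv (s := {j | x (Tuple.sort x j) ≤ a}) (Tuple.sort x) (by simp)]
  exact (Tuple.lt_card_le_iff_apply_le_of_monotone (Tuple.monotone_sort x)).symm

theorem kmin_le_kmin_add {N : ℕ} {x y : Fin N → ℝ} {c : ℝ} (h : ∀ j, x j ≤ y j + c)
    (k : Fin N) : kmin x k ≤ kmin y k + c := by
  have hcard : (k : ℕ) < Finset.card {j | y j ≤ kmin y k} := kmin_le_iff.1 le_rfl
  refine kmin_le_iff.2 (hcard.trans_le (Finset.card_le_card ?_))
  exact Finset.monotone_filter_right _ fun j _ hj => (h j).trans (by gcongr)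

namespace IsPMF

theorem sum_mul_le_sum_mul_add {α : Type*} [Fintype α] {p f g : α → ℝ} {c : ℝ} (hp : IsPMF p)
    (h : ∀ a, f a ≤ g a + c) : ∑ a, p a * f a ≤ ∑ a, p a * g a + c :=
  calc ∑ a, p a * f a ≤ ∑ a, p a * (g a + c) :=
        Finset.sum_le_sum fun a _ => mul_le_mul_of_nonneg_left (h a) (hp.1 a)
    _ = ∑ a, p a * g a + c := by
        simp only [mul_add, Finset.sum_add_distrib, ← Finset.sum_mul, hp.2, one_mul]

theorem pi {κ : Type*} [Fintype κ] [DecidableEq κ] {ι : κ → Type*} [∀ j, Fintype (ι j)]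
    {P : ∀ j, ι j → ℝ} (hP : ∀ j, IsPMF (P j)) :
    IsPMF fun v : ∀ j, ι j => ∏ j, P j (v j) := by
  refine ⟨fun v => Finset.prod_nonneg fun j _ => (hP j).1 (v j), ?_⟩
  rw [← Fintype.prod_sum]
  exact Finset.prod_eq_one fun j _ => (hP j).2

end IsPMF

theorem sub_le_mul_log_div {x y : ℝ} (hx : 0 ≤ x) (hy : 0 ≤ y) (hxy : y = 0 → x = 0) :
    x - y ≤ x * Real.log (x / y) := by
  rcases hy.eq_or_lt' with rfl | hy_pos
  · simp [hxy rfl]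
  · have hkl : 0 ≤ y * InformationTheory.klFun (x / y) :=
      mul_nonneg hy (InformationTheory.klFun_nonneg (div_nonneg hx hy))
    have hexpand : y * InformationTheory.klFun (x / y) = x * Real.log (x / y) + y - x := by
      rw [InformationTheory.klFun_apply]
      field_simp
    linarith

theorem KLdiv_nonneg {α : Type*} [Fintype α] {p q : α → ℝ} (hp : IsPMF p) (hq : IsPMF q)
    (hpq : ∀ a, q a = 0 → p a = 0) : 0 ≤ KLdiv p q :=
  calc (0 : ℝ) = ∑ a, (p a - q a) := by rw [Finset.sum_sub_distrib, hp.2, hq.2, sub_self]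
    _ ≤ KLdiv p q :=
      Finset.sum_le_sum fun a _ => sub_le_mul_log_div (hp.1 a) (hq.1 a) (hpq a)

theorem le_of_forall_le_add_imp_le_add_mul {X : Type*} {u v : X → ℝ} {γ : ℝ} (hγ : γ < 1)
    (hbdd : BddAbove (Set.range fun x => u x - v x))
    (h : ∀ c, (∀ x, u x ≤ v x + c) → ∀ x, u x ≤ v x + γ * c) : u ≤ v := by
  intro x
  have : Nonempty X := ⟨x⟩
  let c := ⨆ x, (u x - v x)
  have le_add_c (y : X) : u y ≤ v y + c := sub_le_iff_le_add'.1 (le_ciSup hbdd y)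
  have c_le : c ≤ γ * c := ciSup_le fun y => sub_le_iff_le_add'.2 (h c le_add_c y)
  have c_nonpos : c ≤ 0 := by nlinarith
  linarith [le_add_c x]

section Bellman

variable {S A ι : Type*} [Fintype S] [Fintype ι]

/-- The `(N,k)`-pessimistic backup of a state-value function `V`: the common part of `pessBellman`
and `regBellman`, which differ only in the `V` they derive from `Q`. As there, `k` is 0-indexed. -/
noncomputable def pessBackup (r : S → A → ℝ) (γ : ℝ) (P : ι → ℝ) (M : ι → S → A → S → ℝ)
    (N : ℕ) (k : Fin N) (V : S → ℝ) : S → A → ℝ :=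
  fun s a => r s a + γ * ∑ v : Fin N → ι, (∏ j, P (v j)) *
    kmin (fun j => ∑ s', M (v j) s a s' * V s') k

variable {r : S → A → ℝ} {γ : ℝ} {P : ι → ℝ} {M : ι → S → A → S → ℝ} {π μ : S → A → ℝ}
  {α : ℝ} {N : ℕ} {k : Fin N}

theorem pessBackup_le_add_mul (hγ0 : 0 ≤ γ) (hP : IsPMF P) (hM : ∀ v s a, IsPMF (M v s a))
    {V W : S → ℝ} {c : ℝ} (h : ∀ s, V s ≤ W s + c) (s : S) (a : A) :
    pessBackup r γ P M N k V s a ≤ pessBackup r γ P M N k W s a + γ * c := by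
  have kmin_le (v : Fin N → ι) : kmin (fun j => ∑ s', M (v j) s a s' * V s') k ≤
      kmin (fun j => ∑ s', M (v j) s a s' * W s') k + c :=
    kmin_le_kmin_add (fun j => (hM (v j) s a).sum_mul_le_sum_mul_add h) k
  have sum_le := (IsPMF.pi fun _ : Fin N => hP).sum_mul_le_sum_mul_add kmin_le
  rw [pessBackup, pessBackup, add_assoc, ← mul_add]
  gcongr

theorem pessBackup_mono (hγ0 : 0 ≤ γ) (hP : IsPMF P) (hM : ∀ v s a, IsPMF (M v s a)) :
    Monotone (pessBackup r γ P M N k) := fun V W hVW s a => by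
  simpa only [mul_zero, add_zero] using
    pessBackup_le_add_mul hγ0 hP hM (c := 0) (fun s' => by simpa only [add_zero] using hVW s') s a

variable [Fintype A]

theorem regBellman_le_pessBellman (hγ0 : 0 ≤ γ) (hP : IsPMF P) (hM : ∀ v s a, IsPMF (M v s a))
    (hπ : ∀ s, IsPMF (π s)) (hμ : ∀ s, IsPMF (μ s)) (hπμ : ∀ s a, μ s a = 0 → π s a = 0)
    (hα : 0 ≤ α) (Q : S → A → ℝ) :
    regBellman r γ P M π μ α N k Q ≤ pessBellman r γ P M π N k Q :=
  pessBackup_mono hγ0 hP hM fun s =>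
    sub_le_self _ (mul_nonneg hα (KLdiv_nonneg (hπ s) (hμ s) (hπμ s)))

theorem pessBellman_le_add_mul (hγ0 : 0 ≤ γ) (hP : IsPMF P) (hM : ∀ v s a, IsPMF (M v s a))
    (hπ : ∀ s, IsPMF (π s)) {Q R : S → A → ℝ} {c : ℝ} (h : ∀ s a, Q s a ≤ R s a + c)
    (s : S) (a : A) :
    pessBellman r γ P M π N k Q s a ≤ pessBellman r γ P M π N k R s a + γ * c :=
  pessBackup_le_add_mul hγ0 hP hM (fun s' => (hπ s').sum_mul_le_sum_mul_add (h s')) s a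

theorem le_of_le_pessBellman_of_pessBellman_le (hγ0 : 0 ≤ γ) (hγ1 : γ < 1) (hP : IsPMF P)
    (hM : ∀ v s a, IsPMF (M v s a)) (hπ : ∀ s, IsPMF (π s)) {Q R : S → A → ℝ}
    (hQ : Q ≤ pessBellman r γ P M π N k Q) (hR : pessBellman r γ P M π N k R ≤ R) : Q ≤ R := by
  have shrink (c : ℝ) (h : ∀ x : S × A, Q x.1 x.2 ≤ R x.1 x.2 + c) (x : S × A) :
      Q x.1 x.2 ≤ R x.1 x.2 + γ * c :=
    calc Q x.1 x.2 ≤ pessBellman r γ P M π N k Q x.1 x.2 := hQ x.1 x.2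
      _ ≤ pessBellman r γ P M π N k R x.1 x.2 + γ * c :=
        pessBellman_le_add_mul hγ0 hP hM hπ (fun s a => h (s, a)) x.1 x.2
      _ ≤ R x.1 x.2 + γ * c := by gcongr; exact hR x.1 x.2
  have uncurried_le := le_of_forall_le_add_imp_le_add_mul hγ1 (Set.finite_range _).bddAbove shrink
  exact fun s a => uncurried_le (s, a)

theorem regBellman_fixedPoint_le_pessBellman_fixedPoint_general
    (hγ0 : 0 ≤ γ) (hγ1 : γ < 1) (hπ : ∀ s, IsPMF (π s)) (hμ : ∀ s, IsPMF (μ s))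
    (hπμ : ∀ s a, μ s a = 0 → π s a = 0) (hα : 0 ≤ α) (hP : IsPMF P)
    (hM : ∀ v s a, IsPMF (M v s a)) {Qreg Qun : S → A → ℝ}
    (hQreg : Qreg ≤ regBellman r γ P M π μ α N k Qreg)
    (hQun : pessBellman r γ P M π N k Qun ≤ Qun) : Qreg ≤ Qun :=
  le_of_le_pessBellman_of_pessBellman_le hγ0 hγ1 hP hM hπ
    (hQreg.trans (regBellman_le_pessBellman hγ0 hP hM hπ hμ hπμ hα Qreg)) hQun

end Bellman

/-- Key inequality in the proof of Theorem 5: the fixed point of the regularized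
evaluation operator is dominated by the fixed point of the unregularized pessimistic
Bellman operator: `Q̄^π_{N,k;μ}(s,a) ≤ Q^π_{N,k}(s,a)` for all `(s,a)`. -/
theorem regBellman_fixedPoint_le_pessBellman_fixedPoint
    {S A ι : Type*} [Fintype S] [Fintype A] [Fintype ι]
    (r : S → A → ℝ) (γ : ℝ) (hγ0 : 0 ≤ γ) (hγ1 : γ < 1)
    (π : S → A → ℝ) (hπ : ∀ s, IsPMF (π s))
    (μ : S → A → ℝ) (hμ : ∀ s, IsPMF (μ s)) (hμpos : ∀ s a, 0 < μ s a)
    (α : ℝ) (hα : 0 < α)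
    (P : ι → ℝ) (hP : IsPMF P)
    (M : ι → S → A → S → ℝ) (hM : ∀ v s a, IsPMF (M v s a))
    (N : ℕ) (hN : 1 ≤ N) (k : ℕ) (hk1 : 1 ≤ k) (hkN : k ≤ N)
    (Qreg Qun : S → A → ℝ)
    (hQreg : regBellman r γ P M π μ α N ⟨k - 1, by omega⟩ Qreg = Qreg)
    (hQun : pessBellman r γ P M π N ⟨k - 1, by omega⟩ Qun = Qun) :
    ∀ s a, Qreg s a ≤ Qun s a := by
  exact regBellman_fixedPoint_le_pessBellman_fixedPoint_general hγ0 hγ1 hπ hμ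
    (fun s a h => absurd h (hμpos s a).ne') hα.le hP hM hQreg.ge hQun.le
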